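/- For any ADF D, the grounded interpretation grd(D) is a strongly admissible interpretation of D. -/

import Mathlib

/-- Three truth values: true, false, undecided. -/
inductive TV : Type
  | t | f | u
deriving DecidableEq, Repr

/-- The information order on truth values: u <_i t and u <_i f. -/
def TV.ile (x y : TV) : Prop := x = TV.u ∨ x = y

/-- The information order on interpretations, extended pointwise. -/
def ILE {A : Type*} (v w : A → TV) : Prop := ∀ a, TV.ile (v a) (w a)

/-- An abstract dialectical framework on a set of arguments `A`:
each argument `a` has an acceptance condition `C a : (A → Bool) → Bool`. -/
structure ADF (A : Type*) where
  C : A → (A → Bool) → Bool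

/-- The trivial interpretation mapping every argument to undecided. -/
def trivialInterp (A : Type*) : A → TV := fun _ => TV.u

/-- The parents of `a` are the arguments on which its acceptance condition depends. -/
def ADF.parents {A : Type*} [DecidableEq A] (D : ADF A) (a : A) : Set A :=
  {b | ∃ w : A → Bool, D.C a w ≠ D.C a (Function.update w b (!w b))}

/-- A two-valued assignment `w` completes a three-valued interpretation `v`. -/
def Completes {A : Type*} (w : A → Bool) (v : A → TV) : Prop :=
  ∀ b, (v b = TV.t → w b = true) ∧ (v b = TV.f → w b = false)

/-- `φ` is irrefutable under `v`: every completion of `v` makes `φ` true. -/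
def Irrefutable {A : Type*} (φ : (A → Bool) → Bool) (v : A → TV) : Prop :=
  ∀ w : A → Bool, Completes w v → φ w = true

/-- `φ` is unsatisfiable under `v`: every completion of `v` makes `φ` false. -/
def Unsat {A : Type*} (φ : (A → Bool) → Bool) (v : A → TV) : Prop :=
  ∀ w : A → Bool, Completes w v → φ w = false

open Classical in
/-- The characteristic operator Γ_D of an ADF. -/
noncomputable def Gamma {A : Type*} (D : ADF A) (v : A → TV) : A → TV := fun a =>
  if Irrefutable (D.C a) v then TV.t
  else if Unsat (D.C a) v then TV.f
  else TV.u

open Classical in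
/-- `v|_P`: agrees with `v` on `P` and is undecided elsewhere. -/
noncomputable def restrictTV {A : Type*} (v : A → TV) (P : Set A) : A → TV :=
  fun b => if b ∈ P then v b else TV.u

/-- Strong acceptability/deniability of an argument with respect to interpretation `v`
and set `S`, relative to an excluded set `E` (the first index). An argument `a` with
`v a = t` (resp. `v a = f`) is strongly acceptable (resp. strongly deniable) iff there is
`P ⊆ (parents a ∩ S) \ E` with `φ_a^{v|_P}` irrefutable (resp. unsatisfiable) and every
`p ∈ P` strongly acceptable/deniable relative to `E ∪ {p}`. -/
inductive SJrel {A : Type*} [DecidableEq A] (D : ADF A) (v : A → TV) (S : Set A) :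
    Set A → A → Prop
  | acc (E : Set A) (a : A) (P : Set A)
      (ha : v a = TV.t)
      (hP : P ⊆ (D.parents a ∩ S) \ E)
      (hirr : Irrefutable (D.C a) (restrictTV v P))
      (hrec : ∀ p ∈ P, SJrel D v S (E ∪ {p}) p) : SJrel D v S E a
  | den (E : Set A) (a : A) (P : Set A)
      (ha : v a = TV.f)
      (hP : P ⊆ (D.parents a ∩ S) \ E)
      (hunsat : Unsat (D.C a) (restrictTV v P))
      (hrec : ∀ p ∈ P, SJrel D v S (E ∪ {p}) p) : SJrel D v S E a

/-- `a` is strongly acceptable/deniable w.r.t. `v` and `S`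
(i.e., relative to the excluded set `{a}`). -/
def StronglyJustified {A : Type*} [DecidableEq A] (D : ADF A) (v : A → TV)
    (S : Set A) (a : A) : Prop :=
  SJrel D v S {a} a

/-- `S` is a least set for `a` with respect to `v`. -/
def LeastSet {A : Type*} [DecidableEq A] (D : ADF A) (v : A → TV)
    (a : A) (S : Set A) : Prop :=
  StronglyJustified D v S a ∧
  ∀ S' : Set A, S'.ncard < S.ncard → ¬ StronglyJustified D v S' a

/-- An interpretation is strongly admissible iff every argument assigned `t`/`f`
is strongly acceptable/deniable w.r.t. `v` and some set `S`. -/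
def StronglyAdmissible {A : Type*} [DecidableEq A] (D : ADF A) (v : A → TV) : Prop :=
  ∀ a : A, v a ≠ TV.u → ∃ S : Set A, StronglyJustified D v S a

/-- `g` is the grounded interpretation of `D`: the least fixed point of `Γ_D`. -/
def IsGrounded {A : Type*} (D : ADF A) (g : A → TV) : Prop :=
  Gamma D g = g ∧ ∀ w : A → TV, Gamma D w = w → ILE g w

/-- An interpretation is admissible iff `v ≤_i Γ_D(v)`. -/
def Admissible {A : Type*} (D : ADF A) (v : A → TV) : Prop :=
  ILE v (Gamma D v)

/-- An interpretation is conflict-free. -/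
def ConflictFree {A : Type*} (D : ADF A) (v : A → TV) : Prop :=
  ∀ a : A, (v a = TV.t → ∃ w : A → Bool, Completes w v ∧ D.C a w = true) ∧
           (v a = TV.f → Unsat (D.C a) v)

/-- The join of two interpretations: take `v`'s value where defined, else `w`'s. -/
def joinI {A : Type*} (v w : A → TV) : A → TV :=
  fun a => if v a = TV.u then w a else v a

/-!
Every interpretation below the grounded `g` is a restriction `g|_X`, so the iteration of `Γ_D` below
`g` is a monotone operator on sets of arguments, sending `X` to the set of arguments decided by
`Γ_D(g|_X)`. Leastness of `g` says that its least fixed point is the set of all decided arguments.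

To keep excluded arguments out of the justifications, call `X` internally justified if each `a ∈ X`
is strongly justified relative to every excluded set meeting `X` at most in `a`. Such sets are
closed under unions. Enlarging `X` by what `Γ_D(g|_X)` decides preserves the property: if `a ∉ X` is
newly decided and `E` excludes no element of `X`, then the parents of `a` in `X` justify `a`, and
`E ∪ {p}` meets `X` only in `p` for each of them. The largest internally justified set is therefore
closed under the operator, so it contains every decided argument. For finite `A`, the
parents of `a` determine `φ_a`, as one sees by flipping one other argument at a time.
-/

open Set Function

section Interpretations

variable {A : Type*} {v w : A → TV} {X Y : Set A} {a : A}

/-- The set of arguments to which an interpretation assigns `t` or `f`. -/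
def decided (v : A → TV) : Set A := {a | v a ≠ TV.u}

theorem ILE.trans {x : A → TV} (h : ILE v w) (k : ILE w x) : ILE v x := fun a =>
  (h a).elim Or.inl fun hvw => hvw ▸ k a

theorem ILE.eq_of_mem_decided (h : ILE v w) (ha : a ∈ decided v) : v a = w a :=
  (h a).resolve_left ha

theorem ILE.decided_subset (h : ILE v w) : decided v ⊆ decided w := fun _ ha =>
  (h.eq_of_mem_decided ha).symm.trans_ne ha

theorem restrictTV_of_mem (v : A → TV) (ha : a ∈ X) : restrictTV v X a = v a := if_pos ha

theorem restrictTV_of_notMem (v : A → TV) (ha : a ∉ X) : restrictTV v X a = TV.u := if_neg ha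

theorem restrictTV_ile (v : A → TV) (X : Set A) : ILE (restrictTV v X) v := fun a => by
  by_cases ha : a ∈ X
  · exact Or.inr (restrictTV_of_mem v ha)
  · exact Or.inl (restrictTV_of_notMem v ha)

theorem restrictTV_restrictTV (v : A → TV) (X Y : Set A) :
    restrictTV (restrictTV v X) Y = restrictTV v (Y ∩ X) := by
  funext a
  classical
  by_cases hY : a ∈ Y <;> simp [restrictTV, hY]

theorem restrictTV_mono (v : A → TV) (h : X ⊆ Y) : ILE (restrictTV v X) (restrictTV v Y) := by
  rw [← inter_eq_left.2 h, ← restrictTV_restrictTV]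
  exact restrictTV_ile _ X

theorem decided_restrictTV_subset (v : A → TV) (X : Set A) : decided (restrictTV v X) ⊆ X :=
  fun _ ha => by_contra fun haX => ha (restrictTV_of_notMem v haX)

theorem ILE.restrictTV_decided (h : ILE v w) : restrictTV w (decided v) = v := by
  funext a
  by_cases ha : a ∈ decided v
  · rw [restrictTV_of_mem w ha, h.eq_of_mem_decided ha]
  · rw [restrictTV_of_notMem w ha, not_not.1 ha]

end Interpretations

section CharacteristicOperator

variable {A : Type*} {D : ADF A} {v w : A → TV} {a : A}

theorem Completes.anti {x : A → Bool} (hx : Completes x w) (h : ILE v w) : Completes x v :=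
  fun b => by
    rcases h b with hb | hb
    · simp [hb]
    · rw [hb]
      exact hx b

theorem exists_completes (v : A → TV) : ∃ x, Completes x v :=
  ⟨fun b => decide (v b = TV.t), fun b => by cases h : v b <;> simp [h]⟩

theorem Irrefutable.not_unsat {φ : (A → Bool) → Bool} (h : Irrefutable φ v) : ¬ Unsat φ v := by
  obtain ⟨x, hx⟩ := exists_completes v
  intro h'
  exact Bool.false_ne_true ((h' x hx).symm.trans (h x hx))

theorem Gamma_eq_t_iff : Gamma D v a = TV.t ↔ Irrefutable (D.C a) v := by
  unfold Gamma
  split_ifs <;> simp_all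

theorem Gamma_eq_f_iff : Gamma D v a = TV.f ↔ Unsat (D.C a) v := by
  unfold Gamma
  split_ifs with ht hf
  · simp [ht.not_unsat]
  · simp [hf]
  · simp [hf]

theorem Gamma_mono (D : ADF A) (h : ILE v w) : ILE (Gamma D v) (Gamma D w) := by
  intro a
  rcases ha : Gamma D v a with _ | _ | _
  · exact Or.inr (Gamma_eq_t_iff.2 fun x hx => Gamma_eq_t_iff.1 ha x (hx.anti h)).symm
  · exact Or.inr (Gamma_eq_f_iff.2 fun x hx => Gamma_eq_f_iff.1 ha x (hx.anti h)).symm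
  · exact Or.inl rfl

theorem forall_completes_restrictTV_iff {β : Type*} {φ : (A → Bool) → β} {s : Set A}
    (hφ : DependsOn φ s) (v : A → TV) (b : β) :
    (∀ x, Completes x (restrictTV v s) → φ x = b) ↔ ∀ x, Completes x v → φ x = b := by
  classical
  refine ⟨fun h x hx => h x (hx.anti (restrictTV_ile v s)), fun h x hx => ?_⟩
  obtain ⟨y, hy⟩ := exists_completes v
  have hcompl : Completes (s.piecewise x y) v := fun c => by
    by_cases hc : c ∈ s
    · simpa [hc, restrictTV_of_mem v hc] using hx c
    · simpa [hc] using hy c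
  rw [← h _ hcompl]
  exact hφ fun c hc => (piecewise_eq_of_mem s x y hc).symm

theorem Gamma_restrictTV_of_dependsOn {s : Set A} (hs : DependsOn (D.C a) s) (v : A → TV) :
    Gamma D (restrictTV v s) a = Gamma D v a := by
  have hirr : Irrefutable (D.C a) (restrictTV v s) ↔ Irrefutable (D.C a) v :=
    forall_completes_restrictTV_iff hs v true
  have hunsat : Unsat (D.C a) (restrictTV v s) ↔ Unsat (D.C a) v :=
    forall_completes_restrictTV_iff hs v false
  classical simp only [Gamma, hirr, hunsat]

end CharacteristicOperator

section Parents

variable {A : Type*} [DecidableEq A] {D : ADF A} {a : A}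

theorem ADF.C_update_of_notMem_parents {b : A} (hb : b ∉ D.parents a) (w : A → Bool) (x : Bool) :
    D.C a (update w b x) = D.C a w := by
  rcases Bool.eq_or_eq_not x (w b) with rfl | rfl
  · rw [update_eq_self]
  · by_contra h
    exact hb ⟨w, Ne.symm h⟩

theorem ADF.dependsOn_parents_of_finite {s : Set A} (hs : s.Finite) (h : DependsOn (D.C a) s) :
    DependsOn (D.C a) (D.parents a) := by
  intro w w' hww'
  lift s to Finset A using hs
  have hflip (t : Finset A) : D.C a (t.piecewise w' w) = D.C a w := by
    induction t using Finset.induction_on with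
    | empty => rw [Finset.piecewise_empty]
    | insert c t hc ih =>
      rw [Finset.piecewise_insert]
      by_cases hcp : c ∈ D.parents a
      · rwa [← hww' c hcp, ← t.piecewise_eq_of_notMem w' w hc, update_eq_self]
      · rwa [ADF.C_update_of_notMem_parents hcp]
  rw [← hflip s]
  exact h fun c hc => s.piecewise_eq_of_mem w' w hc

end Parents

section GroundedInterpretation

variable {A : Type*} {D : ADF A} {v g : A → TV}

/-- The operator `X ↦ {a | Γ_D(v|_X)(a) ≠ u}` on sets of arguments. It represents `Γ_D` on the
interpretations `v|_X` when `Γ_D(v) ≤_i v`. -/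
noncomputable def decisionStep (D : ADF A) (v : A → TV) : Set A →o Set A where
  toFun X := decided (Gamma D (restrictTV v X))
  monotone' _ _ h := (Gamma_mono D (restrictTV_mono v h)).decided_subset

theorem Gamma_restrictTV_ile (hv : ILE (Gamma D v) v) (X : Set A) :
    ILE (Gamma D (restrictTV v X)) v :=
  (Gamma_mono D (restrictTV_ile v X)).trans hv

theorem IsGrounded.Gamma_ile (hg : IsGrounded D g) : ILE (Gamma D g) g := fun a =>
  Or.inr (congrFun hg.1 a)

theorem IsGrounded.decided_subset_lfp (hg : IsGrounded D g) :
    decided g ⊆ (decisionStep D g).lfp := by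
  set X := (decisionStep D g).lfp
  have hfix : Gamma D (restrictTV g X) = restrictTV g X :=
    calc Gamma D (restrictTV g X)
      _ = restrictTV g (decisionStep D g X) :=
        (Gamma_restrictTV_ile hg.Gamma_ile X).restrictTV_decided.symm
      _ = restrictTV g X := by rw [(decisionStep D g).map_lfp]
  exact (hg.2 _ hfix).decided_subset.trans (decided_restrictTV_subset g X)

end GroundedInterpretation

section StrongJustification

variable {A : Type*} [DecidableEq A] {D : ADF A} {v : A → TV} {X : Set A}

theorem SJrel.of_mem_decided_Gamma {S E P : Set A} {a : A}
    (ha : a ∈ decided (Gamma D (restrictTV v P))) (hva : Gamma D (restrictTV v P) a = v a)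
    (hP : P ⊆ (D.parents a ∩ S) \ E) (hrec : ∀ p ∈ P, SJrel D v S (E ∪ {p}) p) :
    SJrel D v S E a := by
  rcases h : Gamma D (restrictTV v P) a with _ | _ | _
  · exact .acc E a P (hva.symm.trans h) hP (Gamma_eq_t_iff.1 h) hrec
  · exact .den E a P (hva.symm.trans h) hP (Gamma_eq_f_iff.1 h) hrec
  · exact absurd h ha

/-- A set of arguments each of which is strongly acceptable or deniable (with respect to the set of
all arguments) even if everything outside the set is excluded. Excluded sets may contain the
argument itself, as they do in `StronglyJustified`. -/
def InternallyJustified (D : ADF A) (v : A → TV) (X : Set A) : Prop :=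
  ∀ a ∈ X, ∀ E : Set A, E ∩ X ⊆ {a} → SJrel D v univ E a

theorem InternallyJustified.stronglyJustified {a : A} (hX : InternallyJustified D v X)
    (ha : a ∈ X) : StronglyJustified D v univ a :=
  hX a ha {a} inter_subset_left

theorem InternallyJustified.sUnion {𝒳 : Set (Set A)} (h : ∀ X ∈ 𝒳, InternallyJustified D v X) :
    InternallyJustified D v (⋃₀ 𝒳) := by
  rintro a ⟨X, hX, ha⟩ E hE
  exact h X hX a ha E ((inter_subset_inter_right E (subset_sUnion_of_mem hX)).trans hE)

theorem InternallyJustified.union_decisionStep (hX : InternallyJustified D v X)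
    (hv : ILE (Gamma D v) v) (hD : ∀ a, DependsOn (D.C a) (D.parents a)) :
    InternallyJustified D v (X ∪ decisionStep D v X) := by
  intro a ha E hE
  by_cases haX : a ∈ X
  · exact hX a haX E ((inter_subset_inter_right E subset_union_left).trans hE)
  have hdec : a ∈ decided (Gamma D (restrictTV v X)) := ha.resolve_left haX
  have hdisj : ∀ p ∈ X, p ∉ E := fun p hpX hpE =>
    haX (hE ⟨hpE, subset_union_left hpX⟩ ▸ hpX)
  have hGamma : Gamma D (restrictTV v (D.parents a ∩ X)) a = Gamma D (restrictTV v X) a := by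
    rw [← restrictTV_restrictTV, Gamma_restrictTV_of_dependsOn (hD a)]
  refine .of_mem_decided_Gamma (P := D.parents a ∩ X) (hGamma.trans_ne hdec)
    (hGamma.trans ((Gamma_restrictTV_ile hv X).eq_of_mem_decided hdec))
    (fun p hp => ⟨⟨hp.1, mem_univ p⟩, hdisj p hp.2⟩) fun p hp => hX p hp.2 _ ?_
  rintro q ⟨hqE | hqp, hqX⟩
  · exact absurd hqE (hdisj q hqX)
  · exact hqp

theorem exists_internallyJustified_lfp_subset (hv : ILE (Gamma D v) v)
    (hD : ∀ a, DependsOn (D.C a) (D.parents a)) :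
    ∃ X, InternallyJustified D v X ∧ (decisionStep D v).lfp ⊆ X := by
  have hmax := InternallyJustified.sUnion (𝒳 := {X | InternallyJustified D v X}) fun _ hX => hX
  exact ⟨_, hmax, (decisionStep D v).lfp_le <|
    subset_union_right.trans (subset_sUnion_of_mem (hmax.union_decisionStep hv hD))⟩

end StrongJustification

theorem grounded_strongly_admissible_general {A : Type*} [DecidableEq A] (D : ADF A)
    (hD : ∀ a, DependsOn (D.C a) (D.parents a)) (g : A → TV) (hg : IsGrounded D g) :
    StronglyAdmissible D g := by
  intro a ha
  obtain ⟨X, hX, hlfp⟩ := exists_internallyJustified_lfp_subset hg.Gamma_ile hD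
  exact ⟨univ, hX.stronglyJustified (hlfp (hg.decided_subset_lfp ha))⟩

/-- The grounded interpretation is strongly admissible. -/
theorem grounded_strongly_admissible {A : Type*} [Fintype A] [DecidableEq A]
    (D : ADF A) (g : A → TV) (hg : IsGrounded D g) :
    StronglyAdmissible D g :=
  grounded_strongly_admissible_general D
    (fun a => ADF.dependsOn_parents_of_finite finite_univ (dependsOn_univ (D.C a))) g hg
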